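/- arXiv:0902.3126 — 3 statements merged into one kernel-verified Lean document; each statement's English description precedes it below -/
import Mathlib

section
/- Let (M, d) be a metric space, let C be a real number with 0 < C < 1, let ε > 0, and let S ⊆ M be a finite nonempty ε-net. Then for all x, y ∈ M with d(x,y) ≥ 2ε/C, one has (1 − C)·d(x,y) ≤ ‖ι_S(x) − ι_S(y)‖_∞ ≤ d(x,y); that is, the distance-functions imbedding ι_S is (1−C)-bi-Lipschitz at scales large compared with the mesh of the net. -/
/-- For a finite subset `S` of a metric space `M`, the imbedding of `M` into
`ℓ∞(S)` (functions `S → ℝ` with the sup norm) by distance functions from the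
points of `S`. -/
noncomputable def kuratowskiFin {M : Type*} [MetricSpace M] (S : Finset M) (x : M) :
    S → ℝ :=
  fun z => dist x (z : M)

/-- If `S` is a finite nonempty `ε`-net in a metric space `M`, `0 < C < 1`, then for all
points `x, y` with `dist x y ≥ 2ε/C`, the imbedding of `M` into `ℓ∞(S)` by distance
functions from the points of `S` satisfies
`(1 − C)·dist x y ≤ ‖ι_S x − ι_S y‖_∞ ≤ dist x y`:
it is `(1−C)`-bi-Lipschitz at scales large compared with the mesh of the net. -/
theorem kuratowskiFin_biLipschitz_at_large_scales {M : Type*} [MetricSpace M]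
    {C : ℝ} (hC0 : 0 < C) (hC1 : C < 1) {ε : ℝ} (hε : 0 < ε) (S : Finset M)
    (hS : S.Nonempty) (hnet : ∀ x : M, ∃ z ∈ S, dist x z ≤ ε)
    (x y : M) (hxy : 2 * ε / C ≤ dist x y) :
    (1 - C) * dist x y ≤ ‖kuratowskiFin S x - kuratowskiFin S y‖ ∧
      ‖kuratowskiFin S x - kuratowskiFin S y‖ ≤ dist x y := by
  constructor
  · obtain ⟨z, hz, hxz⟩ := hnet x
    have h := norm_le_pi_norm (kuratowskiFin S x - kuratowskiFin S y) ⟨z, hz⟩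
    have e : (kuratowskiFin S x - kuratowskiFin S y) ⟨z, hz⟩ = dist x z - dist y z := rfl
    rw [e, Real.norm_eq_abs] at h
    have h1 := neg_le_abs (dist x z - dist y z)
    have h2 := dist_triangle_right x y z
    have h3 := (div_le_iff₀ hC0).1 hxy
    linarith
  · refine (pi_norm_le_iff_of_nonneg dist_nonneg).2 fun z => ?_
    exact abs_dist_sub_le x y (z : M)
end

section
/- Nonstandard characterization of continuity: let f : ℝ → ℝ and a ∈ ℝ. Then f is continuous at a if and only if for every hyperreal x ∈ ℝ* that is infinitely close to a (i.e. IsSt x a), the value f*(x) of the natural extension of f is infinitely close to f(a) (i.e. IsSt (f*(x)) (f(a))). -/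
open Hyperreal

/-- The natural hyperreal extension `f*` of a real function `f`, induced termwise
on germs. -/
noncomputable def natExt (f : ℝ → ℝ) : ℝ* → ℝ* := Filter.Germ.map f

/-- Nonstandard characterization of continuity at a point: `f : ℝ → ℝ` is continuous
at `a` if and only if for every hyperreal `x` infinitely close to `a`, the natural
extension `f*` sends `x` to a hyperreal infinitely close to `f a`. -/
theorem continuousAt_iff_natExt_isSt (f : ℝ → ℝ) (a : ℝ) :
    ContinuousAt f a ↔ ∀ x : ℝ*, IsSt x a → IsSt (natExt f x) (f a) := by
  constructor
  · intro hf x hx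
    exact isSt_iff_tendsto.2 (Hyperreal.stdPart_map hf (isSt_iff_tendsto.1 hx))
  · intro h
    by_contra hc
    obtain ⟨s, hs, hfs⟩ := Filter.not_tendsto_iff_exists_frequently_notMem.1 hc
    obtain ⟨u, hu, hus⟩ := Filter.exists_seq_forall_of_frequently hfs
    have h1 := h (ofSeq u) (isSt_of_tendsto hu)
    have h2 : Filter.Tendsto (fun n => f (u n)) (Filter.hyperfilter ℕ) (nhds (f a)) :=
      isSt_ofSeq_iff_tendsto.1 h1
    obtain ⟨n, hn⟩ := (h2.eventually hs).exists
    exact hus n hn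
end

section
/- Nonstandard characterization of the derivative: let f : ℝ → ℝ, a ∈ ℝ, and L ∈ ℝ. Then f is differentiable at a with derivative L if and only if for every nonzero infinitesimal hyperreal ε, the difference quotient (f*(a + ε) − f(a)) / ε is infinitely close to L (i.e. IsSt ((f*(a + ε) − f(a)) / ε) L), where f* is the natural extension of f to the hyperreals; in particular f′(a) = st((f*(a+ε) − f(a))/ε) independently of the choice of nonzero infinitesimal ε. -/
open Hyperreal

/-- Nonstandard characterization of the derivative: `f : ℝ → ℝ` has derivative `L`
at `a` if and only if for every nonzero infinitesimal `e`, the difference quotient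
`(f*(a + e) − f(a)) / e` is infinitely close to `L`.  (In particular
`f′(a) = st ((f*(a+e) − f(a))/e)` independently of the choice of nonzero
infinitesimal `e`.) -/
theorem hasDerivAt_iff_natExt_isSt (f : ℝ → ℝ) (a L : ℝ) :
    HasDerivAt f L a ↔
      ∀ e : ℝ*, Infinitesimal e → e ≠ 0 →
        IsSt ((natExt f ((a : ℝ*) + e) - (f a : ℝ*)) / e) L := by
  have key : ∀ u : ℕ → ℝ, (natExt f ((a : ℝ*) + ofSeq u) - (f a : ℝ*)) / ofSeq u =
      ofSeq (fun n => (f (a + u n) - f a) / u n) := fun u => rfl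
  have hne : ∀ u : ℕ → ℝ, ofSeq u ≠ 0 ↔
      ∀ᶠ n in (Filter.hyperfilter ℕ : Filter ℕ), u n ≠ 0 := by
    intro u
    rw [Ultrafilter.eventually_not]
    exact not_congr (Filter.Germ.coe_eq (f := u) (g := fun _ => (0 : ℝ)))
  rw [hasDerivAt_iff_tendsto_slope_zero]
  constructor
  · intro h e he hne0
    obtain ⟨u, rfl⟩ := ofSeq_surjective e
    rw [key, isSt_ofSeq_iff_tendsto]
    have hu : Filter.Tendsto u (Filter.hyperfilter ℕ : Filter ℕ) (nhdsWithin 0 {0}ᶜ) :=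
      tendsto_nhdsWithin_iff.2 ⟨isSt_ofSeq_iff_tendsto.1 he, (hne u).1 hne0⟩
    refine (h.comp hu).congr fun n => ?_
    simp only [Function.comp, smul_eq_mul]
    ring
  · intro h
    by_contra hcon
    rw [Filter.not_tendsto_iff_exists_frequently_notMem] at hcon
    obtain ⟨s, hs, hfr⟩ := hcon
    obtain ⟨u, hu, hus⟩ := Filter.exists_seq_forall_of_frequently hfr
    have hu' := tendsto_nhdsWithin_iff.1 (hu.mono_left Nat.hyperfilter_le_atTop)
    have h1 := h (ofSeq u) (isSt_ofSeq_iff_tendsto.2 hu'.1) ((hne u).2 hu'.2)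
    rw [key, isSt_ofSeq_iff_tendsto] at h1
    obtain ⟨n, hn⟩ := (h1.eventually_mem hs).exists
    apply hus n
    rw [smul_eq_mul, mul_comm, ← div_eq_mul_inv]
    exact hn
end
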